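/- For all x, y ∈ ℝ³ with x ≠ y, both sides below are finite and one has the identity (4π)^{3/2} b^{−1/2} I₀(x,y) = ∫₁^∞ (e^{−b|x−y|²v/4} / v^{1/2}) · exp(−(b|x_⊥−y_⊥|²/4)(coth(1/v) − v)) / (v sinh(1/v)) dv, obtained from the change of variables u = 1/v. -/

import Mathlib

/-!
The substitution `u = 1 / v` maps `(1, ∞)` bijectively onto `(0, 1)` with Jacobian `v⁻²`. Splitting
`coth (1/v) = v + (coth (1/v) - v)` in the exponent turns `v⁻² · kerInt b x y (1/v)` into
`J b x y v` (`inv_sq_mul_kerInt_inv`), so the integrals agree, and the integrability of either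
side follows from that of the other.

For the integrability of `J`, the inequalities `w ≤ sinh w ≤ w cosh w` (`w = 1 / v > 0`) give
`v sinh (1/v) ≥ 1` and `coth (1/v) ≥ v`; hence `0 ≤ J b x y v ≤ exp (-(b |x - y|² / 4) v)` on
`[1, ∞)`, and the right-hand side is integrable because `b > 0` and `x ≠ y`.
-/

open MeasureTheory Set

/-- `|x_⊥ - y_⊥|²` for `x, y ∈ ℝ³`. -/
noncomputable def perpSq (x y : EuclideanSpace ℝ (Fin 3)) : ℝ :=
  (x 0 - y 0) ^ 2 + (x 1 - y 1) ^ 2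

/-- The integrand `exp(-(b/4)[(x₃-y₃)²/u + coth(u)|x_⊥-y_⊥|²]) / (u^{1/2} sinh u)`. -/
noncomputable def kerInt (b : ℝ) (x y : EuclideanSpace ℝ (Fin 3)) (u : ℝ) : ℝ :=
  Real.exp (-(b / 4) * ((x 2 - y 2) ^ 2 / u + Real.cosh u / Real.sinh u * perpSq x y)) /
    (Real.sqrt u * Real.sinh u)

/-- `I₀(x,y) = (b^{1/2}/(4π)^{3/2}) ∫₀¹ kerInt b x y u du`. -/
noncomputable def I0 (b : ℝ) (x y : EuclideanSpace ℝ (Fin 3)) : ℝ :=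
  Real.sqrt b / (4 * Real.pi) ^ ((3 : ℝ) / 2) * ∫ u in Ioo (0 : ℝ) 1, kerInt b x y u

/-- `I_∞(x,y) = (b^{1/2}/(4π)^{3/2}) ∫₁^∞ kerInt b x y u du`. -/
noncomputable def IInf (b : ℝ) (x y : EuclideanSpace ℝ (Fin 3)) : ℝ :=
  Real.sqrt b / (4 * Real.pi) ^ ((3 : ℝ) / 2) * ∫ u in Ici (1 : ℝ), kerInt b x y u

/-- The integrand obtained after the change of variables `u = 1/v`:
`(e^{-b|x-y|²v/4}/v^{1/2}) · exp(-(b|x_⊥-y_⊥|²/4)(coth(1/v) - v)) / (v sinh(1/v))`. -/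
noncomputable def J (b : ℝ) (x y : EuclideanSpace ℝ (Fin 3)) (v : ℝ) : ℝ :=
  Real.exp (-(b * dist x y ^ 2 * v / 4)) / Real.sqrt v *
    (Real.exp (-(b * perpSq x y / 4) * (Real.cosh (1 / v) / Real.sinh (1 / v) - v)) /
      (v * Real.sinh (1 / v)))

lemma sinh_le_mul_cosh {w : ℝ} (hw : 0 < w) : Real.sinh w ≤ w * Real.cosh w := by
  obtain ⟨c, hc, h⟩ := exists_deriv_eq_slope Real.sinh hw Real.continuous_sinh.continuousOn
    Real.differentiable_sinh.differentiableOn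
  rw [Real.deriv_sinh, Real.sinh_zero, sub_zero, sub_zero, eq_div_iff hw.ne'] at h
  have hcw : Real.cosh c ≤ Real.cosh w := by
    rw [Real.cosh_le_cosh, abs_of_pos hc.1, abs_of_pos hw]
    exact hc.2.le
  nlinarith

lemma dist_sq_eq_perpSq_add (x y : EuclideanSpace ℝ (Fin 3)) :
    dist x y ^ 2 = perpSq x y + (x 2 - y 2) ^ 2 := by
  rw [EuclideanSpace.dist_eq, Real.sq_sqrt (Finset.sum_nonneg fun _ _ => sq_nonneg _)]
  simp [Fin.sum_univ_three, Real.dist_eq, sq_abs, perpSq]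

lemma perpSq_nonneg (x y : EuclideanSpace ℝ (Fin 3)) : 0 ≤ perpSq x y := by
  unfold perpSq; positivity

/-- The integrand `J` is the pullback of `kerInt` under `v ↦ v⁻¹`, Jacobian included. -/
lemma inv_sq_mul_kerInt_inv (b : ℝ) (x y : EuclideanSpace ℝ (Fin 3)) {v : ℝ} (hv : 0 < v) :
    (v ^ 2)⁻¹ * kerInt b x y v⁻¹ = J b x y v := by
  have hs : 0 < Real.sinh v⁻¹ := Real.sinh_pos_iff.2 (inv_pos.2 hv)
  have hq : 0 < Real.sqrt v := Real.sqrt_pos.2 hv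
  have hE : Real.exp (-(b * dist x y ^ 2 * v / 4)) *
      Real.exp (-(b * perpSq x y / 4) * (Real.cosh v⁻¹ / Real.sinh v⁻¹ - v)) =
      Real.exp (-(b / 4) * ((x 2 - y 2) ^ 2 / v⁻¹ +
        Real.cosh v⁻¹ / Real.sinh v⁻¹ * perpSq x y)) := by
    rw [← Real.exp_add, dist_sq_eq_perpSq_add, div_inv_eq_mul]
    congr 1
    ring
  unfold J kerInt
  rw [one_div, div_mul_div_comm, hE, Real.sqrt_inv, ← div_eq_inv_mul, div_div]
  congr 1
  have h2 : v = Real.sqrt v * Real.sqrt v := (Real.mul_self_sqrt hv.le).symm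
  generalize Real.sinh v⁻¹ = S at *
  generalize Real.sqrt v = q at *
  subst h2
  field_simp

lemma J_nonneg (b : ℝ) (x y : EuclideanSpace ℝ (Fin 3)) {v : ℝ} (hv : 0 < v) :
    0 ≤ J b x y v := by
  have hs : 0 < Real.sinh (1 / v) := Real.sinh_pos_iff.2 (one_div_pos.2 hv)
  unfold J
  positivity

lemma J_le_exp {b : ℝ} (hb : 0 < b) (x y : EuclideanSpace ℝ (Fin 3)) {v : ℝ} (hv : 1 ≤ v) :
    J b x y v ≤ Real.exp (-(b * dist x y ^ 2 / 4) * v) := by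
  have hv0 : 0 < v := one_pos.trans_le hv
  have hw : 0 < 1 / v := one_div_pos.2 hv0
  have hs : 0 < Real.sinh (1 / v) := Real.sinh_pos_iff.2 hw
  have hden : 1 ≤ v * Real.sinh (1 / v) := by
    have := mul_le_mul_of_nonneg_left (Real.self_le_sinh_iff.2 hw.le) hv0.le
    rwa [mul_one_div_cancel hv0.ne'] at this
  have hcoth : v ≤ Real.cosh (1 / v) / Real.sinh (1 / v) := by
    rw [le_div_iff₀ hs]
    have := mul_le_mul_of_nonneg_left (sinh_le_mul_cosh hw) hv0.le
    rwa [← mul_assoc, mul_one_div_cancel hv0.ne', one_mul] at this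
  have hexp : Real.exp (-(b * perpSq x y / 4) *
      (Real.cosh (1 / v) / Real.sinh (1 / v) - v)) ≤ 1 := by
    rw [Real.exp_le_one_iff, neg_mul, neg_nonpos]
    exact mul_nonneg (by have := perpSq_nonneg x y; positivity) (sub_nonneg.2 hcoth)
  have h1 : Real.exp (-(b * dist x y ^ 2 * v / 4)) / Real.sqrt v ≤
      Real.exp (-(b * dist x y ^ 2 * v / 4)) :=
    div_le_self (Real.exp_pos _).le (Real.one_le_sqrt.2 hv)
  have h2 : Real.exp (-(b * perpSq x y / 4) * (Real.cosh (1 / v) / Real.sinh (1 / v) - v)) /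
      (v * Real.sinh (1 / v)) ≤ 1 := (div_le_self (Real.exp_pos _).le hden).trans hexp
  calc J b x y v ≤ Real.exp (-(b * dist x y ^ 2 * v / 4)) * 1 :=
        mul_le_mul h1 h2 (by positivity) (Real.exp_pos _).le
    _ = Real.exp (-(b * dist x y ^ 2 / 4) * v) := by rw [mul_one]; congr 1; ring

lemma integrableOn_J {b : ℝ} (hb : 0 < b) {x y : EuclideanSpace ℝ (Fin 3)} (hxy : x ≠ y) :
    IntegrableOn (J b x y) (Ici 1) := by
  have ha : 0 < b * dist x y ^ 2 / 4 := by have := dist_pos.2 hxy; positivity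
  have hg : IntegrableOn (fun v : ℝ => Real.exp (-(b * dist x y ^ 2 / 4) * v)) (Ici 1) :=
    integrableOn_Ici_iff_integrableOn_Ioi (by simp) |>.2 (exp_neg_integrableOn_Ioi 1 ha)
  have hm : Measurable (J b x y) := by unfold J; fun_prop
  refine Integrable.mono' hg hm.aestronglyMeasurable ?_
  filter_upwards [ae_restrict_mem measurableSet_Ici] with v hv
  rw [Real.norm_of_nonneg (J_nonneg b x y (one_pos.trans_le hv))]
  exact J_le_exp hb x y hv

lemma image_inv_Ioi_one : (fun v : ℝ => v⁻¹) '' Ioi 1 = Ioo 0 1 := by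
  rw [image_inv_eq_inv, Set.inv_Ioi₀ one_pos, inv_one]

/-- For `x ≠ y` both sides are finite (the integrands are integrable) and
`(4π)^{3/2} b^{-1/2} I₀(x,y) = ∫₁^∞ J(b,x,y,v) dv`. -/
theorem stmt5 (b : ℝ) (hb : 0 < b) (x y : EuclideanSpace ℝ (Fin 3)) (hxy : x ≠ y) :
    IntegrableOn (kerInt b x y) (Ioo 0 1) ∧
    IntegrableOn (J b x y) (Ici 1) ∧
    (4 * Real.pi) ^ ((3 : ℝ) / 2) / Real.sqrt b * I0 b x y =
      ∫ v in Ici (1 : ℝ), J b x y v := by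
  have hderiv : ∀ v ∈ Ioi (1 : ℝ),
      HasDerivWithinAt (fun v : ℝ => v⁻¹) (-(v ^ 2)⁻¹) (Ioi 1) v := fun v hv =>
    (hasDerivAt_inv (one_pos.trans hv).ne').hasDerivWithinAt
  have hinj : InjOn (fun v : ℝ => v⁻¹) (Ioi 1) := inv_injective.injOn
  have hpull : ∀ v ∈ Ioi (1 : ℝ), |-(v ^ 2)⁻¹| • kerInt b x y v⁻¹ = J b x y v := fun v hv => by
    rw [abs_neg, abs_of_nonneg (by positivity), smul_eq_mul,
      inv_sq_mul_kerInt_inv b x y (one_pos.trans hv)]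
  have hJ := integrableOn_J hb hxy
  refine ⟨?_, hJ, ?_⟩
  · rw [← image_inv_Ioi_one,
      integrableOn_image_iff_integrableOn_abs_deriv_smul measurableSet_Ioi hderiv hinj,
      integrableOn_congr_fun hpull measurableSet_Ioi]
    exact hJ.mono_set Ioi_subset_Ici_self
  · have hsub : ∫ u in Ioo (0 : ℝ) 1, kerInt b x y u = ∫ v in Ici (1 : ℝ), J b x y v := by
      rw [← image_inv_Ioi_one,
        integral_image_eq_integral_abs_deriv_smul measurableSet_Ioi hderiv hinj,
        setIntegral_congr_fun measurableSet_Ioi hpull, integral_Ici_eq_integral_Ioi]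
    have hsb : Real.sqrt b ≠ 0 := (Real.sqrt_pos.2 hb).ne'
    have hpi : (4 * Real.pi) ^ ((3 : ℝ) / 2) ≠ 0 := by positivity
    rw [I0, hsub]
    field_simp
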